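/- arXiv:2107.10488 — 2 statements merged into one kernel-verified Lean document; each statement's English description precedes it below -/
import Mathlib

section
/- Let G' = (V',E',m') and G = (V,E,m) be finite weighted graphs such that G' is a weak cover of G. Then h_G ≥ h_{G'}. -/
open Finset

noncomputable section
open scoped Classical

/-- Sum of edge weights between two vertex sets (over ordered pairs),
i.e. `m(U₁,U₂)` for a weighted graph given by the symmetric kernel `m`. -/
def pairW {α : Type*} (m : α → α → ℝ) (U₁ U₂ : Finset α) : ℝ :=
  ∑ u ∈ U₁, ∑ v ∈ U₂, m u v

/-- Weighted degree `m(v)` of a vertex, relative to the vertex set `vs` of the graph. -/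
def degOn {α : Type*} (m : α → α → ℝ) (vs : Finset α) (v : α) : ℝ :=
  ∑ u ∈ vs, m v u

/-- Weight `m(U)` of a set of vertices. -/
def vertOn {α : Type*} (m : α → α → ℝ) (vs : Finset α) (U : Finset α) : ℝ :=
  ∑ v ∈ U, degOn m vs v

/-- The (generalized) Cheeger constant
`h = min over nonempty proper U ⊆ vs of m(U, vs∖U)·m(vs)/(m(U)·m(vs∖U))`. -/
def cheegerOn {α : Type*} (m : α → α → ℝ) (vs : Finset α) : ℝ :=
  sInf { x : ℝ | ∃ U : Finset α, U ⊆ vs ∧ U.Nonempty ∧ U ≠ vs ∧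
    x = pairW m U (vs \ U) * vertOn m vs vs / (vertOn m vs U * vertOn m vs (vs \ U)) }

/-- A weighted graph is a `λ`-expander if `1 - h ≤ λ`. -/
def IsExpanderOn {α : Type*} (m : α → α → ℝ) (vs : Finset α) (lam : ℝ) : Prop :=
  1 - cheegerOn m vs ≤ lam

/-- The ℓ² inner product `⟨φ,ψ⟩ = Σ_v m(v) φ(v) ψ(v)` with respect to the vertex weights. -/
def iprodK {α : Type*} [Fintype α] (m : α → α → ℝ) (φ ψ : α → ℝ) : ℝ :=
  ∑ v, (∑ u, m v u) * (φ v * ψ v)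

/-- The random walk operator `Mφ(v) = (1/m(v)) Σ_u m({u,v}) φ(u)`. -/
def walkK {α : Type*} [Fintype α] (m : α → α → ℝ) (φ : α → ℝ) (v : α) : ℝ :=
  (∑ u, m v u * φ u) / (∑ u, m v u)

/-!
Summing the covering weights over fibres gives `m(U, W) = m'(p⁻¹ U, p⁻¹ W)` for all vertex sets, and
`m(U) = m(U, V)`. Hence `U` and `p⁻¹ U` have the same Cheeger ratio, so the minimum defining `h_G'`
ranges over all the values in the minimum defining `h_G`.
-/

section CheegerRatio

variable {α : Type*} {m : α → α → ℝ} {vs : Finset α}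

/-- The Cheeger ratio `m(U, vs∖U)·m(vs) / (m(U)·m(vs∖U))` of the cut of `vs` into `U` and `vs∖U`,
whose minimum over all cuts is `cheegerOn m vs`. -/
def cheegerRatio (m : α → α → ℝ) (vs U : Finset α) : ℝ :=
  pairW m U (vs \ U) * vertOn m vs vs / (vertOn m vs U * vertOn m vs (vs \ U))

theorem vertOn_eq_pairW (m : α → α → ℝ) (vs U : Finset α) : vertOn m vs U = pairW m U vs :=
  rfl

theorem cheegerOn_le_cheegerRatio (m : α → α → ℝ) {U : Finset α} (hsub : U ⊆ vs)
    (hne : U.Nonempty) (hproper : U ≠ vs) : cheegerOn m vs ≤ cheegerRatio m vs U := by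
  refine csInf_le (Set.Finite.bddBelow ?_) ⟨U, hsub, hne, hproper, rfl⟩
  refine (vs.powerset.image (cheegerRatio m vs)).finite_toSet.subset ?_
  rintro x ⟨U, hU, -, -, rfl⟩
  exact mem_coe.2 (mem_image_of_mem _ (mem_powerset.2 hU))

theorem le_cheegerOn {c : ℝ} (hvs : vs.Nontrivial)
    (hc : ∀ U ⊆ vs, U.Nonempty → U ≠ vs → c ≤ cheegerRatio m vs U) : c ≤ cheegerOn m vs := by
  obtain ⟨a, ha⟩ := hvs.nonempty
  refine le_csInf ⟨_, {a}, singleton_subset_iff.2 ha, singleton_nonempty a,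
    hvs.ne_singleton.symm, rfl⟩ ?_
  rintro x ⟨U, hsub, hne, hproper, rfl⟩
  exact hc U hsub hne hproper

theorem cheegerOn_eq_zero_of_vertOn_eq_zero (h : vertOn m vs vs = 0) : cheegerOn m vs = 0 := by
  have ratio_eq_zero : ∀ x ∈ {x : ℝ | ∃ U : Finset α, U ⊆ vs ∧ U.Nonempty ∧ U ≠ vs ∧
      x = cheegerRatio m vs U}, x = 0 := by
    rintro x ⟨U, -, -, -, rfl⟩
    rw [cheegerRatio, h, mul_zero, zero_div]
  exact le_antisymm (Real.sInf_nonpos fun x hx ↦ (ratio_eq_zero x hx).le)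
    (Real.sInf_nonneg fun x hx ↦ (ratio_eq_zero x hx).ge)

theorem vertOn_self_eq_zero_of_subsingleton (hvs : (vs : Set α).Subsingleton)
    (hdiag : ∀ v ∈ vs, m v v = 0) : vertOn m vs vs = 0 :=
  sum_eq_zero fun u hu ↦ sum_eq_zero fun v hv ↦ by rw [hvs hv hu, hdiag u hu]

end CheegerRatio

section WeightCover

variable {α α' : Type*} [DecidableEq α]

/-- The weight condition of a weak cover `p`: each weight `m u v` between vertices of `vs` is the
total `m'`-weight between the fibres of `p` over `u` and `v` in `vs'`. -/
def IsWeightCover (p : α' → α) (m' : α' → α' → ℝ) (vs' : Finset α') (m : α → α → ℝ)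
    (vs : Finset α) : Prop :=
  ∀ u ∈ vs, ∀ v ∈ vs, m u v = pairW m' {x ∈ vs' | p x = u} {x ∈ vs' | p x = v}

namespace IsWeightCover

variable {p : α' → α} {m' : α' → α' → ℝ} {vs' : Finset α'} {m : α → α → ℝ} {vs : Finset α}

theorem pairW_eq (h : IsWeightCover p m' vs' m vs) {U W : Finset α} (hU : U ⊆ vs) (hW : W ⊆ vs) :
    pairW m U W = pairW m' {x ∈ vs' | p x ∈ U} {x ∈ vs' | p x ∈ W} :=
  calc
    pairW m U W = ∑ u ∈ U, ∑ v ∈ W, ∑ u' ∈ vs' with p u' = u, ∑ v' ∈ vs' with p v' = v, m' u' v' :=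
      sum_congr rfl fun u hu ↦ sum_congr rfl fun v hv ↦ h u (hU hu) v (hW hv)
    _ = ∑ u ∈ U, ∑ u' ∈ vs' with p u' = u, ∑ v ∈ W, ∑ v' ∈ vs' with p v' = v, m' u' v' :=
      sum_congr rfl fun _ _ ↦ sum_comm
    _ = pairW m' {x ∈ vs' | p x ∈ U} {x ∈ vs' | p x ∈ W} := by
      simp only [sum_fiberwise_eq_sum_filter, pairW]

theorem vertOn_eq (h : IsWeightCover p m' vs' m vs) (hmaps : ∀ x ∈ vs', p x ∈ vs) {U : Finset α}
    (hU : U ⊆ vs) : vertOn m vs U = vertOn m' vs' {x ∈ vs' | p x ∈ U} := by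
  rw [vertOn_eq_pairW, vertOn_eq_pairW, h.pairW_eq hU Subset.rfl, filter_true_of_mem hmaps]

theorem cheegerRatio_eq (h : IsWeightCover p m' vs' m vs) (hmaps : ∀ x ∈ vs', p x ∈ vs)
    {U : Finset α} (hU : U ⊆ vs) :
    cheegerRatio m vs U = cheegerRatio m' vs' {x ∈ vs' | p x ∈ U} := by
  -- `cheegerRatio` forms `vs \ U` with the classical decidability instance.
  obtain rfl : ‹DecidableEq α› = fun a b ↦ Classical.propDecidable (a = b) := Subsingleton.elim _ _
  have preimage_sdiff : {x ∈ vs' | p x ∈ vs \ U} = vs' \ {x ∈ vs' | p x ∈ U} := by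
    ext x
    grind
  simp only [cheegerRatio, h.pairW_eq hU sdiff_subset, h.vertOn_eq hmaps hU,
    h.vertOn_eq hmaps sdiff_subset, h.vertOn_eq hmaps Subset.rfl, preimage_sdiff,
    filter_true_of_mem hmaps]

theorem cheegerOn_le_of_nontrivial (h : IsWeightCover p m' vs' m vs) (himage : vs'.image p = vs)
    (hvs : vs.Nontrivial) : cheegerOn m' vs' ≤ cheegerOn m vs := by
  have hmaps : ∀ x ∈ vs', p x ∈ vs := image_subset_iff.1 himage.subset
  refine le_cheegerOn hvs fun U hsub hne hproper ↦ ?_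
  have image_preimage : image p {x ∈ vs' | p x ∈ U} = U := by
    rw [← filter_image (p := (· ∈ U)), himage, filter_mem_eq_inter, inter_eq_right.2 hsub]
  rw [h.cheegerRatio_eq hmaps hsub]
  refine cheegerOn_le_cheegerRatio m' (filter_subset _ _) ?_ fun preimage_eq ↦ hproper ?_
  · rwa [← image_nonempty (f := p), image_preimage]
  · rw [← image_preimage, preimage_eq, himage]

end IsWeightCover

theorem stmt12_general {m : α → α → ℝ} {m' : α' → α' → ℝ} {vs : Finset α} {vs' : Finset α'}
    {p : α' → α} (hdiag : ∀ v ∈ vs, m v v = 0) (himage : vs'.image p = vs)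
    (hweight : IsWeightCover p m' vs' m vs) : cheegerOn m' vs' ≤ cheegerOn m vs := by
  rcases (vs : Set α).subsingleton_or_nontrivial with hsub | hnontrivial
  · -- With one vertex there are no cuts and `cheegerOn m vs = sInf ∅ = 0`; the total weight is also
    -- zero, hence so is the total weight of the cover.
    have hmaps : ∀ x ∈ vs', p x ∈ vs := image_subset_iff.1 himage.subset
    have total_eq_zero : vertOn m vs vs = 0 := vertOn_self_eq_zero_of_subsingleton hsub hdiag
    have total_eq_zero' : vertOn m' vs' vs' = 0 := by
      rwa [hweight.vertOn_eq hmaps Subset.rfl, filter_true_of_mem hmaps] at total_eq_zero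
    rw [cheegerOn_eq_zero_of_vertOn_eq_zero total_eq_zero,
      cheegerOn_eq_zero_of_vertOn_eq_zero total_eq_zero']
  · exact hweight.cheegerOn_le_of_nontrivial himage hnontrivial

end WeightCover

/-- Proposition 4.7: if the weighted graph `G'` (kernel `m'`) is a weak
cover of the weighted graph `G` (kernel `m`), then `h_G ≥ h_{G'}`. -/
theorem stmt12 {α α' : Type*} [Fintype α] [DecidableEq α] [Fintype α'] [DecidableEq α']
    (m : α → α → ℝ) (m' : α' → α' → ℝ)
    (hsymm : ∀ u v : α, m u v = m v u) (hnonneg : ∀ u v : α, 0 ≤ m u v)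
    (hdiag : ∀ v : α, m v v = 0)
    (hsymm' : ∀ u v : α', m' u v = m' v u) (hnonneg' : ∀ u v : α', 0 ≤ m' u v)
    (hdiag' : ∀ v : α', m' v v = 0)
    (p : α' → α) (hpsurj : Function.Surjective p)
    (hedgemap : ∀ u' v' : α', m' u' v' ≠ 0 → m (p u') (p v') ≠ 0)
    (hedgesurj : ∀ u v : α, m u v ≠ 0 → ∃ u' v' : α', p u' = u ∧ p v' = v ∧ m' u' v' ≠ 0)
    (hweight : ∀ u v : α, m u v =
      ∑ u' ∈ Finset.univ.filter (fun x => p x = u),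
        ∑ v' ∈ Finset.univ.filter (fun x => p x = v), m' u' v') :
    cheegerOn m' Finset.univ ≤ cheegerOn m Finset.univ := by
  exact stmt12_general (fun v _ ↦ hdiag v) (image_univ_of_surjective hpsurj)
    fun u _ v _ ↦ hweight u v
end
end

section
/- (Ground graph lemma.) Let λ_gr ≥ 0 and let X be an (s,k,K)-two-layer system whose ground graph is a λ_gr-expander. Let A ⊆ E be nonempty, 0 < μ < 1, and U ⊆ V_{μ-large} (with respect to A). For 0 ≤ i ≤ k set A_U^i = {τ ∈ A : |τ ∩ U| = i}. If w(A)/w(E) ≤ 4μ²/(s³(s−1)²), then (s(s−1)(k−1)/(2μ))·λ_gr + (s³(s−1)²/(4μ²))·(w(A)/w(E)) ≥ (1 − (s(s−1)(k−1)/(2μ))·λ_gr) · Σ_{i=2}^{k} (i−1)·w(A_U^i)/w(A). -/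
open Finset

noncomputable section
open scoped Classical

/-- An `(s,k,K)`-two-layer system `X = (V,E,T)`:  `E` is a set of `k`-element subsets of `V`
covering `V`; `T` is a set of `K`-element subsets of `E` covering `E`; and for every `σ ∈ T`
and every vertex `v ∈ σ` (meaning `v ∈ τ` for some `τ ∈ σ`), `2 ≤ |{τ ∈ σ : v ∈ τ}| ≤ s`.
A positive weight function `w` on `T` is part of the data. -/
structure TwoLayer (V : Type*) [Fintype V] [DecidableEq V] where
  s : ℕ
  k : ℕ
  K : ℕ
  E : Finset (Finset V)
  T : Finset (Finset (Finset V))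
  w0 : Finset (Finset V) → ℝ
  w0_pos : ∀ σ ∈ T, 0 < w0 σ
  card_of_mem_E : ∀ τ ∈ E, τ.card = k
  cover_V : ∀ v : V, ∃ τ ∈ E, v ∈ τ
  card_of_mem_T : ∀ σ ∈ T, σ.card = K
  sub_of_mem_T : ∀ σ ∈ T, ∀ τ ∈ σ, τ ∈ E
  cover_E : ∀ τ ∈ E, ∃ σ ∈ T, τ ∈ σ
  deg_lb : ∀ σ ∈ T, ∀ v : V, (∃ τ ∈ σ, v ∈ τ) → 2 ≤ (σ.filter (fun τ => v ∈ τ)).card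
  deg_ub : ∀ σ ∈ T, ∀ v : V, (∃ τ ∈ σ, v ∈ τ) → (σ.filter (fun τ => v ∈ τ)).card ≤ s

namespace TwoLayer

variable {V : Type*} [Fintype V] [DecidableEq V] (X : TwoLayer V)

/-- The induced weight `w(τ) = Σ_{σ ∈ T, τ ∈ σ} w(σ)` of `τ ∈ E`. -/
def wE (τ : Finset V) : ℝ := ∑ σ ∈ X.T.filter (fun σ => τ ∈ σ), X.w0 σ

/-- The induced weight `w(v) = Σ_{σ ∈ T, v ∈ σ} w(σ)` of a vertex `v ∈ V`. -/
def wV (v : V) : ℝ := ∑ σ ∈ X.T.filter (fun σ => ∃ τ ∈ σ, v ∈ τ), X.w0 σ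

/-- `w(A)` for `A ⊆ E`. -/
def wSet (A : Finset (Finset V)) : ℝ := ∑ τ ∈ A, X.wE τ

/-- `w(U)` for `U ⊆ V`. -/
def wVSet (U : Finset V) : ℝ := ∑ v ∈ U, X.wV v

/-- `w(S)` for `S ⊆ T`. -/
def wT (S : Finset (Finset (Finset V))) : ℝ := ∑ σ ∈ S, X.w0 σ

/-- The weight kernel of the ground graph:
`m_gr({u,v}) = Σ_{τ ∈ E, u,v ∈ τ} w(τ)` for `u ≠ v`. -/
def mGr (u v : V) : ℝ :=
  if u = v then 0 else ∑ τ ∈ X.E.filter (fun τ => u ∈ τ ∧ v ∈ τ), X.wE τ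

/-- `E_v = {τ ∈ E : v ∈ τ}`, the vertex set of the link of `v`. -/
def Ev (v : V) : Finset (Finset V) := X.E.filter (fun τ => v ∈ τ)

/-- The weight kernel of the link of `v`:
`m_v({τ,τ'}) = Σ_{σ ∈ T, τ,τ' ∈ σ} w(σ)` for `τ ≠ τ'` in `E_v`. -/
def mLk (v : V) (τ τ' : Finset V) : ℝ :=
  if τ ≠ τ' ∧ τ ∈ X.Ev v ∧ τ' ∈ X.Ev v then
    ∑ σ ∈ X.T.filter (fun σ => τ ∈ σ ∧ τ' ∈ σ), X.w0 σ
  else 0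

/-- `m_v(B)` for a set `B ⊆ E_v` of vertices of the link of `v`. -/
def mLkSet (v : V) (B : Finset (Finset V)) : ℝ := vertOn (X.mLk v) (X.Ev v) B

/-- `τ ↔ τ'` : `τ,τ' ∈ E` are disjoint and contained in a common `σ ∈ T`. -/
def nintAdj (τ τ' : Finset V) : Prop :=
  τ ∈ X.E ∧ τ' ∈ X.E ∧ τ ∩ τ' = ∅ ∧ ∃ σ ∈ X.T, τ ∈ σ ∧ τ' ∈ σ

/-- The weight kernel of the non-intersecting graph. -/
def mNint (τ τ' : Finset V) : ℝ :=
  if X.nintAdj τ τ' then ∑ σ ∈ X.T.filter (fun σ => τ ∈ σ ∧ τ' ∈ σ), X.w0 σ else 0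

/-- The set of vertices that are `δ`-large with respect to `A ⊆ E`, i.e. those with
`m_v(A_v)/m_v(E_v) ≥ δ`. -/
def VLarge (A : Finset (Finset V)) (δ : ℝ) : Finset V :=
  Finset.univ.filter (fun v => δ ≤ X.mLkSet v (A ∩ X.Ev v) / X.mLkSet v (X.Ev v))

/-- `|{τ' ∈ σ : τ ↔ τ'}|`. -/
def nintCount (τ : Finset V) (σ : Finset (Finset V)) : ℕ :=
  (σ.filter (fun τ' => X.nintAdj τ τ')).card

/-- The set of values `|{τ' ∈ σ : τ ↔ τ'}|` over `τ ∈ E` and `σ ∈ T` with `τ ∈ σ`. -/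
def QSet : Set ℕ := { n | ∃ τ ∈ X.E, ∃ σ ∈ X.T, τ ∈ σ ∧ n = X.nintCount τ σ }

/-- `Q_nint^max`. -/
def Qmax : ℕ := sSup X.QSet

/-- `Q_nint^min`. -/
def Qmin : ℕ := sInf X.QSet

/-- The regularity constant `R_nint = Q_nint^min / Q_nint^max`. -/
def Rnint : ℝ := (X.Qmin : ℝ) / (X.Qmax : ℝ)

end TwoLayer

/-!
Write `n_τ = |τ ∩ U|`, `N = w(A)`, `W = w(E)`, `b = ∑_{τ ∈ E} w(τ) n_τ` and
`S = ∑_{τ ∈ A} w(τ) (n_τ - 1)⁺`, so that the sum in the theorem is `S / N`. The weight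
`P = m_gr(U, U) = ∑_{τ ∈ E} w(τ) n_τ (n_τ - 1)` is squeezed from both sides: Cauchy–Schwarz on `A`
gives `S (S + N) ≤ P N`, and expansion of the ground graph gives `P W ≤ λ (k - 1) b W + b²`. The
vertices of `U` being `μ`-large means `b ≤ c (N + S)` with `c = (s - 1) / μ`. After cancelling
`N + S`, these three inequalities say `S / N ≤ λ (k - 1) c + c² (N / W) (1 + S / N)`.
-/

section WeightedGraph

variable {α : Type*} {m : α → α → ℝ} {vs U : Finset α} {lam : ℝ}

theorem pairW_nonneg (hm : ∀ u v, 0 ≤ m u v) (U₁ U₂ : Finset α) : 0 ≤ pairW m U₁ U₂ :=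
  sum_nonneg fun _ _ => sum_nonneg fun _ _ => hm _ _

theorem vertOn_nonneg (hm : ∀ u v, 0 ≤ m u v) (vs U : Finset α) : 0 ≤ vertOn m vs U :=
  pairW_nonneg hm U vs

theorem pairW_self_add_pairW_sdiff (hU : U ⊆ vs) :
    pairW m U U + pairW m U (vs \ U) = vertOn m vs U := by
  simp only [pairW, vertOn, degOn, ← sum_add_distrib]
  exact sum_congr rfl fun u _ => by rw [add_comm, sum_sdiff hU]

theorem vertOn_add_vertOn_sdiff (hU : U ⊆ vs) :
    vertOn m vs U + vertOn m vs (vs \ U) = vertOn m vs vs := by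
  rw [add_comm]
  exact sum_sdiff hU

theorem pairW_self_le_vertOn (hm : ∀ u v, 0 ≤ m u v) (hU : U ⊆ vs) :
    pairW m U U ≤ vertOn m vs U := by
  rw [← pairW_self_add_pairW_sdiff hU]
  exact le_add_of_nonneg_right (pairW_nonneg hm _ _)

theorem cheegerOn_le (hm : ∀ u v, 0 ≤ m u v) (hU : U ⊆ vs) (hU₀ : U.Nonempty) (hU₁ : U ≠ vs) :
    cheegerOn m vs ≤
      pairW m U (vs \ U) * vertOn m vs vs / (vertOn m vs U * vertOn m vs (vs \ U)) := by
  refine csInf_le ⟨0, ?_⟩ ⟨U, hU, hU₀, hU₁, rfl⟩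
  rintro _ ⟨W, -, -, -, rfl⟩
  exact div_nonneg (mul_nonneg (pairW_nonneg hm _ _) (vertOn_nonneg hm _ _))
    (mul_nonneg (vertOn_nonneg hm _ _) (vertOn_nonneg hm _ _))

theorem cheegerOn_mul_vertOn_le (hm : ∀ u v, 0 ≤ m u v) (hU : U ⊆ vs) :
    cheegerOn m vs * (vertOn m vs U * vertOn m vs (vs \ U)) ≤
      pairW m U (vs \ U) * vertOn m vs vs := by
  have hcut : 0 ≤ pairW m U (vs \ U) * vertOn m vs vs :=
    mul_nonneg (pairW_nonneg hm _ _) (vertOn_nonneg hm _ _)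
  rcases (mul_nonneg (vertOn_nonneg hm vs U) (vertOn_nonneg hm vs (vs \ U))).eq_or_lt with h | hpos
  · rwa [← h, mul_zero]
  · have hU₀ : U.Nonempty := by
      rw [nonempty_iff_ne_empty]
      rintro rfl
      simp [vertOn] at hpos
    have hU₁ : U ≠ vs := by
      rintro rfl
      simp [vertOn] at hpos
    exact (le_div_iff₀ hpos).1 (cheegerOn_le hm hU hU₀ hU₁)

theorem IsExpanderOn.pairW_self_mul_vertOn_le (hexp : IsExpanderOn m vs lam)
    (hm : ∀ u v, 0 ≤ m u v) (hU : U ⊆ vs) :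
    pairW m U U * vertOn m vs vs ≤
      lam * vertOn m vs U * vertOn m vs vs + (1 - lam) * vertOn m vs U ^ 2 := by
  have hcut : (1 - lam) * (vertOn m vs U * vertOn m vs (vs \ U)) ≤
      pairW m U (vs \ U) * vertOn m vs vs :=
    (mul_le_mul_of_nonneg_right (sub_le_comm.1 hexp)
      (mul_nonneg (vertOn_nonneg hm _ _) (vertOn_nonneg hm _ _))).trans
      (cheegerOn_mul_vertOn_le hm hU)
  rw [eq_sub_of_add_eq (pairW_self_add_pairW_sdiff hU)]
  rw [eq_sub_of_add_eq' (vertOn_add_vertOn_sdiff hU)] at hcut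
  linarith

end WeightedGraph

theorem sum_sum_filter_mem {V R : Type*} [DecidableEq V] [CommSemiring R]
    (B : Finset (Finset V)) (U : Finset V) (g : Finset V → R) :
    ∑ v ∈ U, ∑ τ ∈ B.filter (fun τ => v ∈ τ), g τ = ∑ τ ∈ B, g τ * #(τ ∩ U) := by
  rw [sum_comm' (t' := B) (s' := fun τ => τ ∩ U) (by grind)]
  simp only [sum_const, nsmul_eq_mul, mul_comm]

namespace TwoLayer

variable {V : Type*} [Fintype V] [DecidableEq V] (X : TwoLayer V)
  {A : Finset (Finset V)} {μ lam : ℝ}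

theorem wE_nonneg (τ : Finset V) : 0 ≤ X.wE τ :=
  sum_nonneg fun σ hσ => (X.w0_pos σ (mem_filter.1 hσ).1).le

theorem wE_pos {τ : Finset V} (hτ : τ ∈ X.E) : 0 < X.wE τ := by
  obtain ⟨σ, hσ, hτσ⟩ := X.cover_E τ hτ
  exact sum_pos (fun σ hσ => X.w0_pos σ (mem_filter.1 hσ).1) ⟨σ, mem_filter.2 ⟨hσ, hτσ⟩⟩

theorem wSet_nonneg (A : Finset (Finset V)) : 0 ≤ X.wSet A :=
  sum_nonneg fun τ _ => X.wE_nonneg τ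

theorem wSet_pos (hAE : A ⊆ X.E) (hA : A.Nonempty) : 0 < X.wSet A :=
  sum_pos (fun _ hτ => X.wE_pos (hAE hτ)) hA

theorem mGr_nonneg (u v : V) : 0 ≤ X.mGr u v := by
  unfold mGr
  split_ifs
  exacts [le_rfl, X.wSet_nonneg _]

theorem card_inter_le {τ : Finset V} (hτ : τ ∈ X.E) (U : Finset V) : #(τ ∩ U) ≤ X.k :=
  (card_le_card inter_subset_left).trans_eq (X.card_of_mem_E τ hτ)

theorem two_le_s (hE : X.E.Nonempty) (hk : 0 < X.k) : 2 ≤ X.s := by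
  obtain ⟨τ, hτ⟩ := hE
  obtain ⟨v, hv⟩ : τ.Nonempty := card_pos.1 (by rwa [X.card_of_mem_E τ hτ])
  obtain ⟨σ, hσ, hτσ⟩ := X.cover_E τ hτ
  exact (X.deg_lb σ hσ v ⟨τ, hτσ, hv⟩).trans (X.deg_ub σ hσ v ⟨τ, hτσ, hv⟩)

theorem k_pos_of_ssubset_E (hAE : A ⊂ X.E) (hA : A.Nonempty) : 0 < X.k := by
  by_contra! hk
  have eq_empty : ∀ τ ∈ X.E, τ = ∅ := fun τ hτ =>
    card_eq_zero.1 ((X.card_of_mem_E τ hτ).trans (Nat.le_zero.1 hk))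
  obtain ⟨τ₀, hτ₀⟩ := hA
  obtain ⟨τ, hτ, hτA⟩ := exists_of_ssubset hAE
  rw [eq_empty τ hτ, ← eq_empty τ₀ (hAE.1 hτ₀)] at hτA
  exact hτA hτ₀

/-- The weighted number `∑_{τ ∈ B} w(τ) |τ ∩ U|` of incidences between a set `B` of edges and a
set `U` of vertices. -/
def incidenceWeight (B : Finset (Finset V)) (U : Finset V) : ℝ :=
  ∑ τ ∈ B, X.wE τ * #(τ ∩ U)

/-- The weighted number `∑_{τ ∈ A} w(τ) (|τ ∩ U| - 1)⁺` of incidences between `A` and `U` beyond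
the first one on each edge; the positive part is taken by truncated subtraction in `ℕ`. -/
def excessWeight (A : Finset (Finset V)) (U : Finset V) : ℝ :=
  ∑ τ ∈ A, X.wE τ * (#(τ ∩ U) - 1 : ℕ)

theorem incidenceWeight_nonneg (B : Finset (Finset V)) (U : Finset V) :
    0 ≤ X.incidenceWeight B U :=
  sum_nonneg fun τ _ => mul_nonneg (X.wE_nonneg τ) (Nat.cast_nonneg _)

theorem excessWeight_nonneg (A : Finset (Finset V)) (U : Finset V) : 0 ≤ X.excessWeight A U :=
  sum_nonneg fun τ _ => mul_nonneg (X.wE_nonneg τ) (Nat.cast_nonneg _)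

theorem incidenceWeight_eq_sum_wSet (B : Finset (Finset V)) (U : Finset V) :
    X.incidenceWeight B U = ∑ v ∈ U, X.wSet (B.filter (fun τ => v ∈ τ)) :=
  (sum_sum_filter_mem B U X.wE).symm

theorem incidenceWeight_E_univ : X.incidenceWeight X.E univ = X.k * X.wSet X.E := by
  rw [incidenceWeight, wSet, mul_sum]
  refine sum_congr rfl fun τ hτ => ?_
  rw [inter_univ, X.card_of_mem_E τ hτ, mul_comm]

theorem incidenceWeight_le_wSet_add_excessWeight (A : Finset (Finset V)) (U : Finset V) :
    X.incidenceWeight A U ≤ X.wSet A + X.excessWeight A U := by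
  rw [incidenceWeight, wSet, excessWeight, ← sum_add_distrib]
  refine sum_le_sum fun τ _ => ?_
  have hcard : (#(τ ∩ U) : ℝ) ≤ 1 + (#(τ ∩ U) - 1 : ℕ) := by
    exact_mod_cast (by omega : #(τ ∩ U) ≤ 1 + (#(τ ∩ U) - 1))
  calc X.wE τ * #(τ ∩ U) ≤ X.wE τ * (1 + (#(τ ∩ U) - 1 : ℕ)) :=
        mul_le_mul_of_nonneg_left hcard (X.wE_nonneg τ)
    _ = X.wE τ + X.wE τ * (#(τ ∩ U) - 1 : ℕ) := by ring

theorem sum_Icc_mul_wSet_filter_card_inter (hAE : A ⊆ X.E) (U : Finset V) :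
    ∑ i ∈ Icc 2 X.k, ((i : ℝ) - 1) * X.wSet (A.filter (fun τ => #(τ ∩ U) = i)) =
      X.excessWeight A U := by
  simp only [wSet, excessWeight, sum_filter, mul_sum]
  rw [sum_comm]
  refine sum_congr rfl fun τ hτ => ?_
  have hk : #(τ ∩ U) ≤ X.k := X.card_inter_le (hAE hτ) U
  simp only [mul_ite, mul_zero, sum_ite_eq, mem_Icc, hk, and_true]
  split_ifs with h2
  · rw [Nat.cast_sub (by omega), Nat.cast_one, mul_comm]
  · simp [show #(τ ∩ U) - 1 = 0 by omega]

theorem degOn_mGr {W : Finset V} {u : V} (hu : u ∈ W) :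
    degOn X.mGr W u =
      ∑ τ ∈ X.E.filter (fun τ => u ∈ τ), X.wE τ * ((#(τ ∩ W) : ℝ) - 1) := by
  have hne : degOn X.mGr W u =
      ∑ v ∈ W.erase u, ∑ τ ∈ X.E.filter (fun τ => u ∈ τ ∧ v ∈ τ), X.wE τ := by
    rw [degOn, ← add_sum_erase W _ hu, mGr, if_pos rfl, zero_add]
    exact sum_congr rfl fun v hv => if_neg (ne_of_mem_erase hv).symm
  rw [hne, sum_comm' (t' := X.E.filter (fun τ => u ∈ τ)) (s' := fun τ => (τ ∩ W).erase u)
    (by grind)]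
  refine sum_congr rfl fun τ hτ => ?_
  rw [sum_const, nsmul_eq_mul, mul_comm,
    cast_card_erase_of_mem (mem_inter.2 ⟨(mem_filter.1 hτ).2, hu⟩)]

theorem vertOn_mGr {U W : Finset V} (hUW : U ⊆ W) :
    vertOn X.mGr W U = ∑ τ ∈ X.E, X.wE τ * ((#(τ ∩ W) : ℝ) - 1) * #(τ ∩ U) := by
  rw [vertOn, sum_congr rfl fun u hu => X.degOn_mGr (hUW hu), sum_sum_filter_mem]

theorem vertOn_mGr_univ (U : Finset V) :
    vertOn X.mGr univ U = ((X.k : ℝ) - 1) * X.incidenceWeight X.E U := by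
  rw [X.vertOn_mGr (subset_univ U), incidenceWeight, mul_sum]
  refine sum_congr rfl fun τ hτ => ?_
  rw [inter_univ, X.card_of_mem_E τ hτ]
  ring

theorem pairW_mGr_self (U : Finset V) :
    pairW X.mGr U U =
      ∑ τ ∈ X.E, X.wE τ * (((#(τ ∩ U) - 1 : ℕ) : ℝ) ^ 2 + (#(τ ∩ U) - 1 : ℕ)) := by
  refine (X.vertOn_mGr (subset_refl U)).trans (sum_congr rfl fun τ _ => ?_)
  cases #(τ ∩ U) with
  | zero => simp
  | succ n =>
    rw [Nat.add_sub_cancel, Nat.cast_succ]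
    ring

theorem excessWeight_mul_add_le_pairW_mul (hAE : A ⊆ X.E) (U : Finset V) :
    X.excessWeight A U * (X.excessWeight A U + X.wSet A) ≤ pairW X.mGr U U * X.wSet A := by
  set Q := ∑ τ ∈ A, X.wE τ * ((#(τ ∩ U) - 1 : ℕ) : ℝ) ^ 2 with hQ
  have cauchy_schwarz : X.excessWeight A U ^ 2 ≤ X.wSet A * Q :=
    sum_sq_le_sum_mul_sum_of_sq_le_mul A (fun τ _ => X.wE_nonneg τ)
      (fun τ _ => mul_nonneg (X.wE_nonneg τ) (sq_nonneg _)) (fun τ _ => le_of_eq (by ring))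
  have restrict_to_A : Q + X.excessWeight A U ≤ pairW X.mGr U U := by
    rw [hQ, excessWeight, ← sum_add_distrib, pairW_mGr_self]
    simp only [← mul_add]
    exact sum_le_sum_of_subset_of_nonneg hAE
      fun τ _ _ => mul_nonneg (X.wE_nonneg τ) (by positivity)
  calc X.excessWeight A U * (X.excessWeight A U + X.wSet A)
      = X.excessWeight A U ^ 2 + X.excessWeight A U * X.wSet A := by ring
    _ ≤ X.wSet A * Q + X.excessWeight A U * X.wSet A := by gcongr
    _ = (Q + X.excessWeight A U) * X.wSet A := by ring
    _ ≤ pairW X.mGr U U * X.wSet A :=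
      mul_le_mul_of_nonneg_right restrict_to_A (X.wSet_nonneg A)

theorem pairW_mGr_self_mul_wSet_le (hlam : 0 ≤ lam) (hexp : IsExpanderOn X.mGr univ lam)
    (hk : 0 < X.k) (U : Finset V) :
    pairW X.mGr U U * X.wSet X.E ≤
      lam * ((X.k : ℝ) - 1) * X.incidenceWeight X.E U * X.wSet X.E +
        X.incidenceWeight X.E U ^ 2 := by
  rcases eq_or_lt_of_le (Nat.one_le_iff_ne_zero.2 hk.ne') with hk1 | hk1
  · have hP : pairW X.mGr U U ≤ 0 := by
      simpa [vertOn_mGr_univ, ← hk1] using pairW_self_le_vertOn X.mGr_nonneg (subset_univ U)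
    simpa [← hk1] using
      (mul_nonpos_of_nonpos_of_nonneg hP (X.wSet_nonneg X.E)).trans (sq_nonneg _)
  have hk1' : (0 : ℝ) < X.k - 1 := sub_pos.2 (by exact_mod_cast hk1)
  have hmix := hexp.pairW_self_mul_vertOn_le X.mGr_nonneg (subset_univ U)
  rw [X.vertOn_mGr_univ U, X.vertOn_mGr_univ univ, X.incidenceWeight_E_univ] at hmix
  set b := X.incidenceWeight X.E U
  have hb : (1 - lam) * (((X.k : ℝ) - 1) * b) ^ 2 ≤ b ^ 2 * ((X.k - 1) * X.k) := by
    have hcoeff : (1 - lam) * ((X.k : ℝ) - 1) ≤ X.k := by nlinarith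
    calc (1 - lam) * (((X.k : ℝ) - 1) * b) ^ 2
        = (1 - lam) * ((X.k : ℝ) - 1) * ((X.k - 1) * b ^ 2) := by ring
      _ ≤ X.k * ((X.k - 1) * b ^ 2) := by gcongr
      _ = b ^ 2 * ((X.k - 1) * X.k) := by ring
  refine le_of_mul_le_mul_right ?_ (mul_pos hk1' (Nat.cast_pos.2 hk))
  linarith

theorem degOn_mLk {v : V} {τ : Finset V} (hτ : τ ∈ X.Ev v) :
    degOn (X.mLk v) (X.Ev v) τ =
      ∑ σ ∈ X.T.filter (fun σ => τ ∈ σ), X.w0 σ * ((#(σ.filter (fun τ => v ∈ τ)) : ℝ) - 1) := by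
  have hne : degOn (X.mLk v) (X.Ev v) τ = ∑ τ' ∈ (X.Ev v).erase τ,
      ∑ σ ∈ X.T.filter (fun σ => τ ∈ σ ∧ τ' ∈ σ), X.w0 σ := by
    rw [degOn, ← add_sum_erase _ _ hτ, mLk, if_neg (fun h => h.1 rfl), zero_add]
    exact sum_congr rfl fun τ' hτ' =>
      if_pos ⟨(ne_of_mem_erase hτ').symm, hτ, mem_of_mem_erase hτ'⟩
  rw [hne, sum_comm' (t' := X.T.filter (fun σ => τ ∈ σ))
    (s' := fun σ => (σ.filter (fun τ => v ∈ τ)).erase τ)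
    (by have := X.sub_of_mem_T; grind [Ev])]
  refine sum_congr rfl fun σ hσ => ?_
  rw [sum_const, nsmul_eq_mul, mul_comm, cast_card_erase_of_mem
    (mem_filter.2 ⟨(mem_filter.1 hσ).2, (mem_filter.1 hτ).2⟩)]

theorem wE_le_degOn_mLk {v : V} {τ : Finset V} (hτ : τ ∈ X.Ev v) :
    X.wE τ ≤ degOn (X.mLk v) (X.Ev v) τ := by
  rw [X.degOn_mLk hτ, wE]
  refine sum_le_sum fun σ hσ => ?_
  obtain ⟨hσ, hτσ⟩ := mem_filter.1 hσ
  have hdeg : (2 : ℝ) ≤ #(σ.filter (fun τ => v ∈ τ)) := by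
    exact_mod_cast X.deg_lb σ hσ v ⟨τ, hτσ, (mem_filter.1 hτ).2⟩
  exact le_mul_of_one_le_right (X.w0_pos σ hσ).le (by linarith)

theorem degOn_mLk_le {v : V} {τ : Finset V} (hτ : τ ∈ X.Ev v) :
    degOn (X.mLk v) (X.Ev v) τ ≤ ((X.s : ℝ) - 1) * X.wE τ := by
  rw [X.degOn_mLk hτ, wE, mul_comm, sum_mul]
  refine sum_le_sum fun σ hσ => ?_
  obtain ⟨hσ, hτσ⟩ := mem_filter.1 hσ
  have hdeg : (#(σ.filter (fun τ => v ∈ τ)) : ℝ) ≤ X.s := by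
    exact_mod_cast X.deg_ub σ hσ v ⟨τ, hτσ, (mem_filter.1 hτ).2⟩
  exact mul_le_mul_of_nonneg_left (by linarith) (X.w0_pos σ hσ).le

theorem wSet_Ev_le_mLkSet (v : V) : X.wSet (X.Ev v) ≤ X.mLkSet v (X.Ev v) :=
  sum_le_sum fun _ hτ => X.wE_le_degOn_mLk hτ

theorem mLkSet_le {v : V} {B : Finset (Finset V)} (hB : B ⊆ X.Ev v) :
    X.mLkSet v B ≤ ((X.s : ℝ) - 1) * X.wSet B := by
  rw [mLkSet, vertOn, wSet, mul_sum]
  exact sum_le_sum fun τ hτ => X.degOn_mLk_le (hB hτ)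

theorem mul_wSet_Ev_le_of_mem_VLarge (hμ : 0 < μ) {v : V} (hv : v ∈ X.VLarge A μ) :
    μ * X.wSet (X.Ev v) ≤ ((X.s : ℝ) - 1) * X.wSet (A ∩ X.Ev v) := by
  have hratio := (mem_filter.1 hv).2
  have hpos : 0 < X.mLkSet v (X.Ev v) := by
    refine lt_of_le_of_ne ((X.wSet_nonneg _).trans (X.wSet_Ev_le_mLkSet v)) fun h => ?_
    rw [← h, div_zero] at hratio
    exact hμ.not_ge hratio
  calc μ * X.wSet (X.Ev v) ≤ μ * X.mLkSet v (X.Ev v) := by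
        gcongr; exact X.wSet_Ev_le_mLkSet v
    _ ≤ X.mLkSet v (A ∩ X.Ev v) := (le_div_iff₀ hpos).1 hratio
    _ ≤ ((X.s : ℝ) - 1) * X.wSet (A ∩ X.Ev v) := X.mLkSet_le inter_subset_right

theorem mul_incidenceWeight_E_le (hAE : A ⊆ X.E) (hμ : 0 < μ) {U : Finset V}
    (hU : U ⊆ X.VLarge A μ) :
    μ * X.incidenceWeight X.E U ≤ ((X.s : ℝ) - 1) * X.incidenceWeight A U := by
  rw [incidenceWeight_eq_sum_wSet, incidenceWeight_eq_sum_wSet, mul_sum, mul_sum]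
  refine sum_le_sum fun v hv => ?_
  have hAv : A.filter (fun τ => v ∈ τ) = A ∩ X.Ev v := by
    rw [Ev, inter_filter, inter_eq_left.2 hAE]
  rw [hAv]
  exact X.mul_wSet_Ev_le_of_mem_VLarge hμ (hU hv)

theorem ssubset_E_of_wSet_div_lt_one (hAE : A ⊆ X.E) (hA : A.Nonempty)
    (hratio : X.wSet A / X.wSet X.E < 1) : A ⊂ X.E := by
  refine hAE.ssubset_of_ne ?_
  rintro rfl
  exact hratio.ne (div_self (X.wSet_pos subset_rfl hA).ne')

end TwoLayer

theorem one_sub_mul_div_le_of_sandwich {S N W P b c L : ℝ} (hS : 0 ≤ S) (hN : 0 < N) (hW : 0 < W)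
    (hL : 0 ≤ L) (hb₀ : 0 ≤ b) (hb : b ≤ c * (N + S)) (hlower : S * (S + N) ≤ P * N)
    (hupper : P * W ≤ L * b * W + b ^ 2) :
    (1 - c ^ 2 * (N / W)) * (S / N) ≤ L * c + c ^ 2 * (N / W) := by
  have hprod : S * W * (N + S) ≤ N * (L * c * W + c ^ 2 * (N + S)) * (N + S) := by
    calc S * W * (N + S) = S * (S + N) * W := by ring
      _ ≤ P * N * W := by gcongr
      _ = P * W * N := by ring
      _ ≤ (L * b * W + b ^ 2) * N := by gcongr
      _ ≤ (L * (c * (N + S)) * W + (c * (N + S)) ^ 2) * N := by gcongr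
      _ = N * (L * c * W + c ^ 2 * (N + S)) * (N + S) := by ring
  have hcancel : S * W ≤ N * (L * c * W + c ^ 2 * (N + S)) :=
    le_of_mul_le_mul_right hprod (by positivity)
  have hdiv : S / N ≤ L * c + c ^ 2 * (N / W) * (1 + S / N) := by
    rw [div_le_iff₀ hN]
    refine le_of_mul_le_mul_right (hcancel.trans_eq ?_) hW
    field_simp
  linarith

theorem one_sub_mul_le_of_one_sub_mul_le {p q L D x : ℝ} (hp : 1 ≤ p) (hq : 2 ≤ q)
    (hL : 0 ≤ L) (hD : 0 ≤ D) (hx : 0 ≤ x) (hqD : q * D ≤ 1) (h : (1 - D) * x ≤ L + D) :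
    (1 - p * L) * x ≤ p * L + q * D := by
  have hD2 : 2 * D ≤ 1 := (mul_le_mul_of_nonneg_right hq hD).trans hqD
  have hx_le : x ≤ L * (1 + x) + 2 * D := by
    -- With `L = (1 - D) x - D`, the difference of the two sides is exactly this sum of squares.
    have hsq : 0 ≤ (1 - 2 * D) * x ^ 2 + D * (x - 1) ^ 2 :=
      add_nonneg (mul_nonneg (by linarith) (sq_nonneg _)) (mul_nonneg hD (sq_nonneg _))
    have hmul := mul_le_mul_of_nonneg_right h (by linarith : 0 ≤ 1 + x)
    linarith
  have hpL : L * (1 + x) ≤ p * (L * (1 + x)) := le_mul_of_one_le_left (by positivity) hp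
  have hqD' : 2 * D ≤ q * D := mul_le_mul_of_nonneg_right hq hD
  linarith

theorem one_sub_mul_le_of_le_four_mul_sq_div {s d μ lam ρ x : ℝ} (hs : 2 ≤ s) (hd : 0 ≤ d)
    (hμ : 0 < μ) (hlam : 0 ≤ lam) (hρ : 0 ≤ ρ) (hx : 0 ≤ x)
    (hsmall : ρ ≤ 4 * μ ^ 2 / (s ^ 3 * (s - 1) ^ 2))
    (h : (1 - ((s - 1) / μ) ^ 2 * ρ) * x ≤ lam * d * ((s - 1) / μ) + ((s - 1) / μ) ^ 2 * ρ) :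
    (1 - s * (s - 1) * d / (2 * μ) * lam) * x ≤
      s * (s - 1) * d / (2 * μ) * lam + s ^ 3 * (s - 1) ^ 2 / (4 * μ ^ 2) * ρ := by
  have hs1 : 0 < s - 1 := by linarith
  have hs3 : 2 ^ 3 ≤ s ^ 3 := by gcongr
  have hL : s * (s - 1) * d / (2 * μ) * lam = s / 2 * (lam * d * ((s - 1) / μ)) := by field_simp
  have hD : s ^ 3 * (s - 1) ^ 2 / (4 * μ ^ 2) * ρ = s ^ 3 / 4 * (((s - 1) / μ) ^ 2 * ρ) := by
    field_simp
  have hD1 : s ^ 3 * (s - 1) ^ 2 / (4 * μ ^ 2) * ρ ≤ 1 := by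
    rw [div_mul_eq_mul_div, div_le_one (by positivity)]
    exact (le_div_iff₀' (by positivity)).1 hsmall
  rw [hD] at hD1
  rw [hL, hD]
  exact one_sub_mul_le_of_one_sub_mul_le (by linarith) (by linarith) (by positivity)
    (by positivity) hx hD1 h

theorem four_mul_sq_div_lt_one {μ : ℝ} (hμ₀ : 0 ≤ μ) (hμ₁ : μ < 1) (s : ℕ) :
    4 * μ ^ 2 / ((s : ℝ) ^ 3 * ((s : ℝ) - 1) ^ 2) < 1 := by
  have hμ2 : μ ^ 2 < 1 := pow_lt_one₀ hμ₀ hμ₁ two_ne_zero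
  rcases lt_or_ge s 2 with hs | hs
  · interval_cases s <;> norm_num
  · have hs' : (2 : ℝ) ≤ s := by exact_mod_cast hs
    have hden : (2 : ℝ) ^ 3 * 1 ^ 2 ≤ (s : ℝ) ^ 3 * ((s : ℝ) - 1) ^ 2 := by
      gcongr
      linarith
    rw [div_lt_one (by linarith)]
    linarith

theorem stmt13_general {V : Type*} [Fintype V] [DecidableEq V] (X : TwoLayer V)
    (lamgr : ℝ) (hlamgr : 0 ≤ lamgr)
    (hexp : IsExpanderOn X.mGr Finset.univ lamgr) (hk : 0 < X.k)
    (A : Finset (Finset V)) (hAE : A ⊆ X.E) (hA : A.Nonempty)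
    (μ : ℝ) (hμ0 : 0 < μ)
    (U : Finset V) (hU : U ⊆ X.VLarge A μ) :
    (1 - (((X.s : ℝ) - 1) / μ) ^ 2 * (X.wSet A / X.wSet X.E)) *
        ∑ i ∈ Finset.Icc 2 X.k,
          ((i : ℝ) - 1) * X.wSet (A.filter (fun τ => (τ ∩ U).card = i)) / X.wSet A
      ≤ lamgr * ((X.k : ℝ) - 1) * (((X.s : ℝ) - 1) / μ) +
          (((X.s : ℝ) - 1) / μ) ^ 2 * (X.wSet A / X.wSet X.E) := by
  rw [← sum_div, X.sum_Icc_mul_wSet_filter_card_inter hAE]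
  have hs1 : (0 : ℝ) ≤ X.s - 1 :=
    sub_nonneg.2 (by exact_mod_cast one_le_two.trans (X.two_le_s (hA.mono hAE) hk))
  have hk1 : (0 : ℝ) ≤ X.k - 1 := sub_nonneg.2 (by exact_mod_cast hk)
  have hlarge : X.incidenceWeight X.E U ≤
      ((X.s : ℝ) - 1) / μ * (X.wSet A + X.excessWeight A U) := by
    rw [div_mul_eq_mul_div, le_div_iff₀' hμ0]
    exact (X.mul_incidenceWeight_E_le hAE hμ0 hU).trans
      (mul_le_mul_of_nonneg_left (X.incidenceWeight_le_wSet_add_excessWeight A U) hs1)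
  exact one_sub_mul_div_le_of_sandwich (X.excessWeight_nonneg A U) (X.wSet_pos hAE hA)
    (X.wSet_pos subset_rfl (hA.mono hAE)) (mul_nonneg hlamgr hk1)
    (X.incidenceWeight_nonneg X.E U) hlarge (X.excessWeight_mul_add_le_pairW_mul hAE U)
    (X.pairW_mGr_self_mul_wSet_le hlamgr hexp hk U)

/-- Lemma 4.9, ground graph lemma. -/
theorem stmt13 {V : Type*} [Fintype V] [DecidableEq V] (X : TwoLayer V)
    (lamgr : ℝ) (hlamgr : 0 ≤ lamgr)
    (hexp : IsExpanderOn X.mGr Finset.univ lamgr)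
    (A : Finset (Finset V)) (hAE : A ⊆ X.E) (hA : A.Nonempty)
    (μ : ℝ) (hμ0 : 0 < μ) (hμ1 : μ < 1)
    (U : Finset V) (hU : U ⊆ X.VLarge A μ)
    (hsmall : X.wSet A / X.wSet X.E ≤ 4 * μ ^ 2 / ((X.s : ℝ) ^ 3 * ((X.s : ℝ) - 1) ^ 2)) :
    (1 - (X.s : ℝ) * ((X.s : ℝ) - 1) * ((X.k : ℝ) - 1) / (2 * μ) * lamgr) *
        ∑ i ∈ Finset.Icc 2 X.k,
          ((i : ℝ) - 1) * X.wSet (A.filter (fun τ => (τ ∩ U).card = i)) / X.wSet A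
      ≤ (X.s : ℝ) * ((X.s : ℝ) - 1) * ((X.k : ℝ) - 1) / (2 * μ) * lamgr +
          (X.s : ℝ) ^ 3 * ((X.s : ℝ) - 1) ^ 2 / (4 * μ ^ 2) * (X.wSet A / X.wSet X.E) := by
  have hk : 0 < X.k := X.k_pos_of_ssubset_E
    (X.ssubset_E_of_wSet_div_lt_one hAE hA
      (hsmall.trans_lt (four_mul_sq_div_lt_one hμ0.le hμ1 X.s))) hA
  have hs : (2 : ℝ) ≤ X.s := by exact_mod_cast X.two_le_s (hA.mono hAE) hk
  have hk1 : (0 : ℝ) ≤ X.k - 1 := sub_nonneg.2 (by exact_mod_cast hk)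
  have hsum : 0 ≤ ∑ i ∈ Finset.Icc 2 X.k,
      ((i : ℝ) - 1) * X.wSet (A.filter (fun τ => (τ ∩ U).card = i)) / X.wSet A := by
    rw [← sum_div, X.sum_Icc_mul_wSet_filter_card_inter hAE]
    exact div_nonneg (X.excessWeight_nonneg A U) (X.wSet_nonneg A)
  exact one_sub_mul_le_of_le_four_mul_sq_div hs hk1 hμ0 hlamgr
    (div_nonneg (X.wSet_nonneg A) (X.wSet_nonneg X.E)) hsum hsmall
    (stmt13_general X lamgr hlamgr hexp hk A hAE hA μ hμ0 U hU)
end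
end
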